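/- Let G be a finite simple graph on N vertices with minimum degree at least δ, and let t be an integer with 1 ≤ t ≤ N. Then there exist vertex sets S and T with |S| = |T| = t such that the number of edges of G having both endpoints in S ∪ T is at least t²·δ/(2N). -/

import Mathlib

open Finset

/-!
Among `N` weights, the `t` largest carry at least the fraction `t / N` of the total. Applied to the
degrees this selects `S`, and applied to the numbers of neighbours in `S` it selects `T`, so at
least the fraction `(t / N)²` of all ordered adjacent pairs lies in `S × T`. There are at least
`N * δ` such pairs in total as soon as the average degree is at least `δ`, and each edge inside
`S ∪ T` gives rise to at most two of those in `S × T`.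
-/

open scoped BigOperators

section TopSubset

variable {ι M : Type*} [LinearOrder M]

theorem exists_subset_card_eq_forall_sdiff_le [DecidableEq ι]
    (f : ι → M) (s : Finset ι) {n : ℕ} (hn : n ≤ #s) :
    ∃ t ⊆ s, #t = n ∧ ∀ i ∈ t, ∀ j ∈ s \ t, f j ≤ f i := by
  induction n with
  | zero => exact ⟨∅, empty_subset s, card_empty, by simp⟩
  | succ n ih =>
    obtain ⟨t, hts, htn, htop⟩ := ih (by lia)
    have hne : (s \ t).Nonempty := sdiff_nonempty_of_card_lt_card (by lia)
    obtain ⟨m, hm, hmax⟩ := exists_max_image (s \ t) f hne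
    obtain ⟨hms, hmt⟩ := mem_sdiff.mp hm
    refine ⟨insert m t, insert_subset hms hts, by rw [card_insert_of_notMem hmt, htn], ?_⟩
    intro i hi j hj
    have hj' : j ∈ s \ t := sdiff_subset_sdiff subset_rfl (subset_insert m t) hj
    obtain rfl | hit := mem_insert.mp hi
    · exact hmax j hj'
    · exact htop i hit j hj'

theorem exists_subset_card_eq_nsmul_sum_le [AddCommMonoid M] [IsOrderedAddMonoid M]
    (f : ι → M) (s : Finset ι) {n : ℕ} (hn : n ≤ #s) :
    ∃ t ⊆ s, #t = n ∧ n • ∑ i ∈ s, f i ≤ #s • ∑ i ∈ t, f i := by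
  classical
  obtain ⟨t, hts, rfl, htop⟩ := exists_subset_card_eq_forall_sdiff_le f s hn
  refine ⟨t, hts, rfl, ?_⟩
  calc #t • ∑ i ∈ s, f i
      = ∑ j ∈ s \ t, #t • f j + #t • ∑ i ∈ t, f i := by
        rw [← sum_sdiff hts, nsmul_add, sum_nsmul]
    _ ≤ ∑ _j ∈ s \ t, ∑ i ∈ t, f i + #t • ∑ i ∈ t, f i := by
        gcongr with j hj
        exact card_nsmul_le_sum t f (f j) fun i hi ↦ htop i hi j hj
    _ = #s • ∑ i ∈ t, f i := by
        rw [sum_const, ← add_nsmul, card_sdiff_add_card_eq_card hts]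

end TopSubset

section Relation

variable {α β : Type*} (r : α → β → Prop) [∀ a, DecidablePred (r a)] (A : Finset α) (B : Finset β)

theorem card_interedges_eq_sum_left : #(Rel.interedges r A B) = ∑ a ∈ A, #{b ∈ B | r a b} := by
  simp only [Rel.interedges, card_filter, sum_product]

theorem card_interedges_eq_sum_right : #(Rel.interedges r A B) = ∑ b ∈ B, #{a ∈ A | r a b} := by
  simp only [Rel.interedges, card_filter, sum_product_right]

theorem exists_subset_subset_mul_card_interedges_le {m n : ℕ} (hm : m ≤ #A) (hn : n ≤ #B) :
    ∃ S ⊆ A, ∃ T ⊆ B, #S = m ∧ #T = n ∧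
      m * n * #(Rel.interedges r A B) ≤ #A * #B * #(Rel.interedges r S T) := by
  obtain ⟨S, hSA, hS, hAS⟩ := exists_subset_card_eq_nsmul_sum_le (fun a ↦ #{b ∈ B | r a b}) A hm
  obtain ⟨T, hTB, hT, hBT⟩ := exists_subset_card_eq_nsmul_sum_le (fun b ↦ #{a ∈ S | r a b}) B hn
  rw [← card_interedges_eq_sum_left, ← card_interedges_eq_sum_left, smul_eq_mul, smul_eq_mul] at hAS
  rw [← card_interedges_eq_sum_right, ← card_interedges_eq_sum_right, smul_eq_mul,
    smul_eq_mul] at hBT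
  refine ⟨S, hSA, T, hTB, hS, hT, ?_⟩
  calc m * n * #(Rel.interedges r A B)
      = n * (m * #(Rel.interedges r A B)) := by ring
    _ ≤ n * (#A * #(Rel.interedges r S B)) := Nat.mul_le_mul_left n hAS
    _ = #A * (n * #(Rel.interedges r S B)) := by ring
    _ ≤ #A * (#B * #(Rel.interedges r S T)) := Nat.mul_le_mul_left #A hBT
    _ = #A * #B * #(Rel.interedges r S T) := by ring

end Relation

section Graph

variable {α : Type*} (G : SimpleGraph α) [DecidableRel G.Adj]

theorem card_interedges_univ_eq_sum_degree [Fintype α] :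
    #(G.interedges univ univ) = ∑ v, G.degree v := by
  simp only [SimpleGraph.interedges, card_interedges_eq_sum_left,
    ← G.card_neighborFinset_eq_degree, G.neighborFinset_eq_filter]

variable [DecidableEq α]

theorem card_interedges_le_two_mul_ncard_edges_union (S T : Finset α) :
    #(G.interedges S T) ≤ 2 * {e ∈ G.edgeSet | ∀ v ∈ e, v ∈ S ∪ T}.ncard := by
  have hfinite : {e ∈ G.edgeSet | ∀ v ∈ e, v ∈ S ∪ T}.Finite :=
    (S ∪ T).sym2.finite_toSet.subset fun e he ↦ mem_sym2_iff.mpr he.2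
  rw [Set.ncard_eq_toFinset_card _ hfinite]
  refine card_le_mul_card_image_of_maps_to (f := fun p : α × α ↦ s(p.1, p.2)) ?_ 2 ?_
  · rintro ⟨a, b⟩ hab
    obtain ⟨ha, hb, hadj⟩ := G.mem_interedges_iff.mp hab
    simp [ha, hb, hadj]
  · rintro ⟨x, y⟩ -
    have hfiber : {p ∈ G.interedges S T | s(p.1, p.2) = s(x, y)} ⊆ {(x, y), (y, x)} := by
      intro p hp
      simpa [Prod.ext_iff] using (mem_filter.mp hp).2
    exact (card_le_card hfiber).trans card_le_two

theorem stmt_7_general [Fintype α] [Nonempty α] {δ : ℝ} (hδ : δ ≤ 𝔼 v, (G.degree v : ℝ))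
    {t : ℕ} (ht : t ≤ Fintype.card α) :
    ∃ S T : Finset α, #S = t ∧ #T = t ∧
      (t : ℝ) ^ 2 * δ / (2 * Fintype.card α) ≤
        ({e ∈ G.edgeSet | ∀ v ∈ e, v ∈ S ∪ T}.ncard : ℝ) := by
  obtain ⟨S, -, T, -, hS, hT, hST⟩ :=
    exists_subset_subset_mul_card_interedges_le G.Adj univ univ ht ht
  refine ⟨S, T, hS, hT, ?_⟩
  set N := Fintype.card α
  set e := {e ∈ G.edgeSet | ∀ v ∈ e, v ∈ S ∪ T}.ncard
  have hN : (0 : ℝ) < N := Nat.cast_pos.mpr Fintype.card_pos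
  have hpairs : (t : ℝ) ^ 2 * ∑ v, (G.degree v : ℝ) ≤ N ^ 2 * (2 * e) := by
    rw [← SimpleGraph.interedges, card_interedges_univ_eq_sum_degree, ← sq, ← sq] at hST
    exact_mod_cast hST.trans
      (Nat.mul_le_mul_left _ (card_interedges_le_two_mul_ncard_edges_union G S T))
  calc (t : ℝ) ^ 2 * δ / (2 * N)
      ≤ t ^ 2 * ((∑ v, (G.degree v : ℝ)) / N) / (2 * N) := by
        gcongr; rwa [← Fintype.expect_eq_sum_div_card]
    _ = t ^ 2 * (∑ v, (G.degree v : ℝ)) / (2 * N ^ 2) := by field_simp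
    _ ≤ N ^ 2 * (2 * e) / (2 * N ^ 2) := by gcongr
    _ = e := by field_simp

end Graph

/-- In a graph on `N` vertices with minimum degree at least `δ`, for any
`1 ≤ t ≤ N` there are vertex sets `S, T` of size `t` such that at least `t²·δ/(2N)` edges
have both endpoints in `S ∪ T`. -/
theorem stmt_7 {α : Type*} [Fintype α] [DecidableEq α]
    (G : SimpleGraph α) (N : ℕ) (hN : N = Fintype.card α)
    (δ : ℝ) (hδ : ∀ v : α, δ ≤ ((G.neighborSet v).ncard : ℝ))
    (t : ℕ) (ht1 : 1 ≤ t) (ht2 : t ≤ N) :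
    ∃ S T : Finset α, S.card = t ∧ T.card = t ∧
      (t : ℝ) ^ 2 * δ / (2 * N) ≤
        ({e ∈ G.edgeSet | ∀ v ∈ e, v ∈ S ∪ T}.ncard : ℝ) := by
  classical
  subst hN
  have : Nonempty α := Fintype.card_pos_iff.mp (by lia)
  refine stmt_7_general G (le_expect univ_nonempty fun v _ ↦ ?_) ht2
  simpa only [← G.coe_neighborFinset, Set.ncard_coe_finset,
    G.card_neighborFinset_eq_degree] using hδ v
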